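/- The space L_3 of Lie elements of ℂ[S_3] with respect to the permutation representation ℂ³ has dimension 4, and the four elements 1 − (12), 1 − (23), 1 − (13), and (123) − (132) form a basis of L_3. -/

import Mathlib

/-- The wedge product `v₁ ∧ ⋯ ∧ vₘ` of a family of vectors, as an element of the `m`-th
exterior power `⋀[k]^m V`. -/
noncomputable def wedge (k : Type*) [Field k] (V : Type*) [AddCommGroup V] [Module k V]
    (m : ℕ) (v : Fin m → V) : ⋀[k]^m V :=
  ⟨ExteriorAlgebra.ιMulti k m v, ExteriorAlgebra.ιMulti_range k m (Set.mem_range_self v)⟩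

/-- The permutation representation of the symmetric group `S_n` on `ℂⁿ`: a permutation `σ`
sends the basis vector `xᵢ` to `x_{σ i}`, i.e. it acts on coordinate functions by
`(σ · v) i = v (σ⁻¹ i)`. -/
noncomputable def permRep (n : ℕ) : Representation ℂ (Equiv.Perm (Fin n)) (Fin n → ℂ) where
  toFun σ := LinearMap.funLeft ℂ ℂ ⇑σ⁻¹
  map_one' := by ext v i; simp [LinearMap.funLeft]
  map_mul' σ τ := by ext v i; simp [LinearMap.funLeft]

/-!
A transposition acts on `V` as `v ↦ v - φ v • u`, a rank-one perturbation of the identity. In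
`(v₁ - φ v₁ • u) ∧ ⋯ ∧ (vₘ - φ vₘ • u)` every term with two factors `u` vanishes, and what is left
is exactly the equality of `A_m` and `B_m` on `1 - σ`, in every degree `m`.

For a 3-cycle `c`, the only degree in which `A_m = B_m` on `c - c⁻¹` has content is `m = 2`. There
`⋀² V` is spanned by the wedges `w ∧ c w` and `w ∧ c⁻¹ w` of basis vectors, on which the equality
is a consequence of `c³ = 1`.

Conversely, in degree `0` a Lie element has coefficient sum `0`, while in top degree `A` is the
sign and `B` the number of fixed points. Together these two equations force the coefficients of
the two 3-cycles to satisfy `3 (x_c + x_{c⁻¹}) = 0`, which leaves the span of the four elements.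
-/

open Equiv Module
open exteriorPower (ιMulti)

section AlternatingMap

variable {R V N ι : Type*} [CommRing R] [AddCommGroup V] [Module R V] [AddCommGroup N] [Module R N]
  [Fintype ι] [DecidableEq ι]

/-- The alternating map `v ↦ ∑ p, g (v₁, …, f vₚ, …, vₘ)`: the action of the Lie algebra element `f`
on the alternating map `g`. -/
def alternatingDerivation (g : V [⋀^ι]→ₗ[R] N) (f : End R V) : V [⋀^ι]→ₗ[R] N where
  __ := ∑ p, g.toMultilinearMap.compLinearMap (Function.update (fun _ ↦ LinearMap.id) p f)
  map_eq_zero_of_eq' v i j hv hij := by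
    have update_comp_swap : Function.update v i (f (v i)) ∘ swap i j =
        Function.update v j (f (v j)) := by
      simp [comp_swap_eq_update, Function.update_comm hij, ← hv, hij, hij.symm]
    have update_apply_eq (p : ι) :
        (fun q ↦ Function.update (fun _ ↦ LinearMap.id) p f q (v q)) =
          Function.update v p (f (v p)) := by
      ext1 q
      obtain rfl | hq := eq_or_ne q p <;> simp [*]
    simp only [MultilinearMap.toFun_eq_coe, sum_apply, MultilinearMap.compLinearMap_apply,
      AlternatingMap.coe_multilinearMap, update_apply_eq]
    rw [Fintype.sum_eq_add i j hij, ← update_comp_swap, add_comm, g.map_swap_add _ hij]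
    rintro p ⟨hpi, hpj⟩
    exact g.map_eq_zero_of_eq _ (by simp [hpi.symm, hpj.symm, hv]) hij

theorem alternatingDerivation_apply (g : V [⋀^ι]→ₗ[R] N) (f : End R V) (v : ι → V) :
    alternatingDerivation g f v = ∑ p, g (Function.update v p (f (v p))) := by
  change (∑ p, g.toMultilinearMap.compLinearMap (Function.update (fun _ ↦ .id) p f)) v = _
  rw [sum_apply]
  refine Finset.sum_congr rfl fun p _ ↦ congrArg g (funext fun q ↦ ?_)
  obtain rfl | hq := eq_or_ne q p <;> simp [*]

theorem alternatingMap_add_smul_const (g : V [⋀^ι]→ₗ[R] N) (v : ι → V) (c : ι → R) (u : V) :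
    g (fun p ↦ v p + c p • u) = g v + ∑ p, c p • g (Function.update v p u) := by
  have two_entries_vanish (s : Finset ι) (hs : 2 ≤ s.card) :
      g (s.piecewise (fun p ↦ c p • u) v) = 0 := by
    obtain ⟨i, hi, j, hj, hij⟩ := Finset.one_lt_card.mp hs
    calc g (s.piecewise (fun p ↦ c p • u) v)
        = g (s.piecewise (fun p ↦ c p • s.piecewise (fun _ ↦ u) v p)
            (s.piecewise (fun _ ↦ u) v)) := by
          congr 1
          ext1 p
          by_cases hp : p ∈ s <;> simp [hp]
      _ = (∏ p ∈ s, c p) • g (s.piecewise (fun _ ↦ u) v) :=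
          g.toMultilinearMap.map_piecewise_smul c _ s
      _ = 0 := by rw [g.map_eq_zero_of_eq _ (by simp [hi, hj]) hij, smul_zero]
  have taylor := g.toMultilinearMap.map_add_eq_map_add_linearDeriv_add v (fun p ↦ c p • u)
  simp only [MultilinearMap.linearDeriv_apply, AlternatingMap.coe_multilinearMap,
    AlternatingMap.map_update_smul] at taylor
  rwa [Finset.sum_eq_zero fun s hs ↦ two_entries_vanish s (Finset.mem_filter.mp hs).2,
    add_zero] at taylor

end AlternatingMap

section ExteriorPower

variable {R V : Type*} [CommRing R] [AddCommGroup V] [Module R V]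

/-- The endomorphism `v₁ ∧ ⋯ ∧ vₘ ↦ ∑ p, v₁ ∧ ⋯ ∧ f vₚ ∧ ⋯ ∧ vₘ` of `⋀[R]^m V`: the degree `m` part
of the derivation of the exterior algebra that extends `f`. -/
noncomputable def exteriorDerivation (m : ℕ) (f : End R V) : End R (⋀[R]^m V) :=
  exteriorPower.alternatingMapLinearEquiv (alternatingDerivation (ιMulti R m) f)

theorem exteriorDerivation_ιMulti (m : ℕ) (f : End R V) (v : Fin m → V) :
    exteriorDerivation m f (ιMulti R m v) = ∑ p, ιMulti R m (Function.update v p (f (v p))) := by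
  rw [exteriorDerivation, exteriorPower.alternatingMapLinearEquiv_apply_ιMulti,
    alternatingDerivation_apply]

theorem exteriorPower_map_zero_eq_one (f : End R V) : exteriorPower.map 0 f = 1 := by
  ext v
  rw [LinearMap.compAlternatingMap_apply, LinearMap.compAlternatingMap_apply,
    exteriorPower.map_apply_ιMulti, Subsingleton.elim (f ∘ v) v, Module.End.one_apply]

theorem exteriorDerivation_zero_eq_zero (f : End R V) : exteriorDerivation 0 f = 0 := by
  ext v
  simp [exteriorDerivation_ιMulti]

theorem exteriorDerivation_one_eq_map (f : End R V) :
    exteriorDerivation 1 f = exteriorPower.map 1 f := by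
  ext v : 2
  rw [LinearMap.compAlternatingMap_apply, LinearMap.compAlternatingMap_apply,
    exteriorPower.map_apply_ιMulti, exteriorDerivation_ιMulti, Fin.sum_univ_one]
  congr 1
  ext1 p
  simp [Subsingleton.elim p 0]

theorem exteriorPower_end_ext_of_basis {ι : Type*} [Finite ι] (b : Basis ι R V) {m : ℕ}
    {F G : End R (⋀[R]^m V)}
    (h : ∀ i : Fin m → ι, Function.Injective i →
      F (ιMulti R m (b ∘ i)) = G (ιMulti R m (b ∘ i))) : F = G :=
  exteriorPower.linearMap_ext (b.ext_alternating h)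

theorem exteriorPower_end_ext_top {n : ℕ} (b : Basis (Fin n) R V) {F G : End R (⋀[R]^n V)}
    (h : F (ιMulti R n b) = G (ιMulti R n b)) : F = G := by
  refine exteriorPower_end_ext_of_basis b fun i hi ↦ ?_
  let σ : Perm (Fin n) := .ofBijective i (Finite.injective_iff_bijective.mp hi)
  change F (ιMulti R n (b ∘ σ)) = G (ιMulti R n (b ∘ σ))
  rw [AlternatingMap.map_perm]
  simp only [Units.smul_def, map_zsmul, h]

theorem smul_one_end_injective {M : Type*} [AddCommGroup M] [Module R M] (φ : M →ₗ[R] R) {w : M}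
    (hw : φ w = 1) : Function.Injective fun a : R ↦ a • (1 : End R M) := fun a a' h ↦ by
  simpa [hw] using congrArg (fun F : End R M ↦ φ (F w)) h

theorem smul_one_end_exteriorPower_zero_injective :
    Function.Injective fun a : R ↦ a • (1 : End R (⋀[R]^0 V)) :=
  smul_one_end_injective (exteriorPower.zeroEquiv R V).toLinearMap (w := ιMulti R 0 0)
    (exteriorPower.zeroEquiv_ιMulti 0)

theorem smul_one_end_exteriorPower_top_injective {n : ℕ} (b : Basis (Fin n) R V) :
    Function.Injective fun a : R ↦ a • (1 : End R (⋀[R]^n V)) :=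
  smul_one_end_injective (exteriorPower.alternatingMapLinearEquiv b.det) (w := ιMulti R n b)
    (by rw [exteriorPower.alternatingMapLinearEquiv_apply_ιMulti, b.det_self])

end ExteriorPower

section LieElements

variable {R G V : Type*} [CommRing R] [AddCommGroup V] [Module R V]

section Monoid

variable [Monoid G] (ρ : Representation R G V)

/-- The linear extension to the group algebra of the action `A_m` of `G` on `⋀[R]^m V` through
`σ v₁ ∧ ⋯ ∧ σ vₘ`. -/
noncomputable def diagonalAction (m : ℕ) : MonoidAlgebra R G →ₗ[R] End R (⋀[R]^m V) :=
  (MonoidAlgebra.basis G R).constr R fun σ ↦ exteriorPower.map m (ρ σ)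

/-- The linear extension to the group algebra of the map `B_m`, which lets `σ ∈ G` act on `⋀[R]^m V`
through `∑ p, v₁ ∧ ⋯ ∧ σ vₚ ∧ ⋯ ∧ vₘ`. -/
noncomputable def derivationAction (m : ℕ) : MonoidAlgebra R G →ₗ[R] End R (⋀[R]^m V) :=
  (MonoidAlgebra.basis G R).constr R fun σ ↦ exteriorDerivation m (ρ σ)

/-- The elements of the group algebra satisfying the degree `m` part `A_m x = B_m x` of the
definition of Lie elements. -/
noncomputable def lieElements (m : ℕ) : Submodule R (MonoidAlgebra R G) :=
  LinearMap.eqLocus (diagonalAction ρ m) (derivationAction ρ m)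

theorem mem_lieElements {m : ℕ} {x : MonoidAlgebra R G} :
    x ∈ lieElements ρ m ↔ diagonalAction ρ m x = derivationAction ρ m x := Iff.rfl

theorem diagonalAction_single (m : ℕ) (σ : G) :
    diagonalAction ρ m (.single σ 1) = exteriorPower.map m (ρ σ) :=
  (MonoidAlgebra.basis_apply R σ) ▸ Basis.constr_basis ..

theorem derivationAction_single (m : ℕ) (σ : G) :
    derivationAction ρ m (.single σ 1) = exteriorDerivation m (ρ σ) :=
  (MonoidAlgebra.basis_apply R σ) ▸ Basis.constr_basis ..

theorem diagonalAction_apply [Fintype G] (m : ℕ) (x : MonoidAlgebra R G) :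
    diagonalAction ρ m x = ∑ σ, x.coeff σ • exteriorPower.map m (ρ σ) :=
  Basis.constr_apply_fintype ..

theorem derivationAction_apply [Fintype G] (m : ℕ) (x : MonoidAlgebra R G) :
    derivationAction ρ m x = ∑ σ, x.coeff σ • exteriorDerivation m (ρ σ) :=
  Basis.constr_apply_fintype ..

theorem eq_diagonalAction {m : ℕ} {A : MonoidAlgebra R G →ₗ[R] End R (⋀[R]^m V)}
    (hA : ∀ σ v, A (.single σ 1) (ιMulti R m v) = ιMulti R m fun p ↦ ρ σ (v p)) :
    A = diagonalAction ρ m := by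
  refine (MonoidAlgebra.basis G R).ext fun σ ↦ exteriorPower.linearMap_ext ?_
  ext v : 1
  simp only [MonoidAlgebra.basis_apply, LinearMap.compAlternatingMap_apply, hA,
    diagonalAction_single, exteriorPower.map_apply_ιMulti, Function.comp_def]

theorem eq_derivationAction {m : ℕ} {B : MonoidAlgebra R G →ₗ[R] End R (⋀[R]^m V)}
    (hB : ∀ σ v, B (.single σ 1) (ιMulti R m v) =
      ∑ p, ιMulti R m (Function.update v p (ρ σ (v p)))) :
    B = derivationAction ρ m := by
  refine (MonoidAlgebra.basis G R).ext fun σ ↦ exteriorPower.linearMap_ext ?_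
  ext v : 1
  simp only [MonoidAlgebra.basis_apply, LinearMap.compAlternatingMap_apply, hB,
    derivationAction_single, exteriorDerivation_ιMulti]

theorem mem_lieElements_zero_iff [Fintype G] {x : MonoidAlgebra R G} :
    x ∈ lieElements ρ 0 ↔ ∑ σ, x.coeff σ = 0 := by
  simp only [mem_lieElements, diagonalAction_apply, derivationAction_apply,
    exteriorPower_map_zero_eq_one, exteriorDerivation_zero_eq_zero, smul_zero,
    Finset.sum_const_zero, ← Finset.sum_smul]
  rw [← (smul_one_end_exteriorPower_zero_injective (R := R) (V := V)).eq_iff, zero_smul]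

theorem mem_lieElements_one (x : MonoidAlgebra R G) : x ∈ lieElements ρ 1 := by
  simp only [mem_lieElements, diagonalAction, derivationAction, exteriorDerivation_one_eq_map]

theorem one_sub_single_mem_lieElements {σ : G} {u : V} {φ : Dual R V}
    (hσ : ρ σ = preReflection u φ) (m : ℕ) : 1 - .single σ 1 ∈ lieElements ρ m := by
  refine exteriorPower.linearMap_ext (AlternatingMap.ext fun v ↦ ?_)
  have reflect (w : V) : ρ σ w = w + (-φ w) • u := by
    rw [hσ, preReflection_apply, neg_smul, sub_eq_add_neg]
  simp only [LinearMap.compAlternatingMap_apply, MonoidAlgebra.one_def, map_sub,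
    LinearMap.sub_apply, diagonalAction_single, derivationAction_single,
    exteriorPower.map_apply_ιMulti, exteriorDerivation_ιMulti, Function.comp_def, reflect,
    alternatingMap_add_smul_const, AlternatingMap.map_update_add, AlternatingMap.map_update_smul,
    map_one, End.one_apply, Function.update_eq_self, Finset.sum_add_distrib]
  abel

end Monoid

theorem single_sub_single_inv_apply_pair [Group G] (ρ : Representation R G V) {g : G}
    (hg : g ^ 3 = 1) (w : V) :
    diagonalAction ρ 2 (.single g 1 - .single g⁻¹ 1) (ιMulti R 2 ![w, ρ g w]) =
      derivationAction ρ 2 (.single g 1 - .single g⁻¹ 1) (ιMulti R 2 ![w, ρ g w]) := by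
  have self_wedge (x : V) : ιMulti R 2 ![x, x] = 0 :=
    AlternatingMap.map_eq_zero_of_eq _ _ (i := 0) (j := 1) rfl zero_ne_one
  have swap_wedge (x y : V) : ιMulti R 2 ![x, y] = -ιMulti R 2 ![y, x] := by
    rw [← AlternatingMap.map_swap _ _ (zero_ne_one (α := Fin 2))]
    congr 1
    ext1 p
    fin_cases p <;> rfl
  have sq_eq_inv : g * g = g⁻¹ := eq_inv_of_mul_eq_one_left (by rw [← hg, pow_succ, sq])
  have apply_apply : ρ g (ρ g w) = ρ g⁻¹ w := by rw [← Module.End.mul_apply, ← map_mul, sq_eq_inv]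
  have map_pair (f : End R V) (x y : V) : f ∘ ![x, y] = ![f x, f y] := by
    ext1 p
    fin_cases p <;> rfl
  have update_pair (x y z : V) :
      Function.update ![x, y] 0 z = ![z, y] ∧ Function.update ![x, y] 1 z = ![x, z] := by
    constructor <;> ext1 p <;> fin_cases p <;> rfl
  simp only [map_sub, LinearMap.sub_apply, diagonalAction_single, derivationAction_single,
    exteriorPower.map_apply_ιMulti, exteriorDerivation_ιMulti, map_pair, Fin.sum_univ_two,
    Matrix.cons_val_zero, Matrix.cons_val_one, update_pair, apply_apply,
    ρ.inv_self_apply, self_wedge, zero_add, add_zero]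
  rw [swap_wedge (ρ g w), swap_wedge _ w]
  abel

theorem single_sub_single_inv_mem_lieElements_zero [Group G] (ρ : Representation R G V) (g : G) :
    .single g 1 - .single g⁻¹ 1 ∈ lieElements ρ 0 := by
  simp only [mem_lieElements, map_sub, diagonalAction_single, derivationAction_single,
    exteriorPower_map_zero_eq_one, exteriorDerivation_zero_eq_zero, sub_self]

end LieElements

section PermutationRepresentation

variable {R V : Type*} [CommRing R] [AddCommGroup V] [Module R V]

theorem representation_swap_eq_preReflection {ι : Type*} [DecidableEq ι]
    {ρ : Representation R (Perm ι) V} {b : Basis ι R V}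
    (hρ : ∀ σ i, ρ σ (b i) = b (σ i)) {i j : ι} (hij : i ≠ j) :
    ρ (swap i j) = preReflection (b i - b j) (b.coord i - b.coord j) := by
  refine b.ext fun k ↦ ?_
  rw [hρ, preReflection_apply]
  obtain rfl | hi := eq_or_ne k i
  · simp [hij.symm]
  obtain rfl | hj := eq_or_ne k j
  · simp [hij.symm]
  · simp [hi, hj, swap_apply_of_ne_of_ne]

variable {n : ℕ} {ρ : Representation R (Perm (Fin n)) V} {b : Basis (Fin n) R V}

theorem exteriorPower_map_top_eq_sign (hρ : ∀ σ i, ρ σ (b i) = b (σ i)) (σ : Perm (Fin n)) :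
    exteriorPower.map n (ρ σ) = ((Perm.sign σ : ℤ) : R) • 1 := by
  refine exteriorPower_end_ext_top b ?_
  have map_basis : ρ σ ∘ b = b ∘ σ := funext (hρ σ)
  rw [exteriorPower.map_apply_ιMulti, map_basis, AlternatingMap.map_perm]
  simp [Units.smul_def, Int.cast_smul_eq_zsmul]

theorem exteriorDerivation_top_eq_card_fixed (hρ : ∀ σ i, ρ σ (b i) = b (σ i))
    (σ : Perm (Fin n)) :
    exteriorDerivation n (ρ σ) = (Finset.card {p | σ p = p} : R) • 1 := by
  refine exteriorPower_end_ext_top b ?_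
  have term (p : Fin n) : ιMulti R n (Function.update b p (ρ σ (b p))) =
      if σ p = p then ιMulti R n b else 0 := by
    rw [hρ]
    split_ifs with hp
    · rw [hp, Function.update_eq_self]
    · exact AlternatingMap.map_eq_zero_of_eq _ _ (i := p) (j := σ p) (by simp [hp]) (Ne.symm hp)
  simp only [exteriorDerivation_ιMulti, term, ← Finset.sum_filter, Finset.sum_const,
    LinearMap.smul_apply, End.one_apply, Nat.cast_smul_eq_nsmul]

theorem mem_lieElements_top_iff (hρ : ∀ σ i, ρ σ (b i) = b (σ i))
    {x : MonoidAlgebra R (Perm (Fin n))} :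
    x ∈ lieElements ρ n ↔ ∑ σ, x.coeff σ * ((Perm.sign σ : ℤ) : R) =
      ∑ σ, x.coeff σ * Finset.card {p | σ p = p} := by
  simp only [mem_lieElements, diagonalAction_apply, derivationAction_apply,
    exteriorPower_map_top_eq_sign hρ, exteriorDerivation_top_eq_card_fixed hρ, smul_smul,
    ← Finset.sum_smul]
  exact (smul_one_end_exteriorPower_top_injective b).eq_iff

theorem single_sub_single_inv_mem_lieElements_two {ι : Type*} [Finite ι]
    {ρ : Representation R (Perm ι) V} {b : Basis ι R V} (hρ : ∀ σ i, ρ σ (b i) = b (σ i))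
    {g : Perm ι} (hg : g ^ 3 = 1) (hι : ∀ i j, i ≠ j → j = g i ∨ j = g⁻¹ i) :
    .single g 1 - .single g⁻¹ 1 ∈ lieElements ρ 2 := by
  refine exteriorPower_end_ext_of_basis b fun i hi ↦ ?_
  have pair : b ∘ i = ![b (i 0), b (i 1)] := by
    ext1 p
    fin_cases p <;> rfl
  rw [pair]
  obtain h | h := hι (i 0) (i 1) (hi.ne zero_ne_one)
  · rw [h, ← hρ]
    exact single_sub_single_inv_apply_pair ρ hg _
  · have inv_case := single_sub_single_inv_apply_pair ρ (g := g⁻¹) (by rw [inv_pow, hg, inv_one])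
      (b (i 0))
    rw [inv_inv, hρ, ← h, ← neg_sub, map_neg, map_neg] at inv_case
    exact neg_injective inv_case

theorem single_sub_single_inv_mem_lieElements_top (hρ : ∀ σ i, ρ σ (b i) = b (σ i))
    (g : Perm (Fin n)) : .single g 1 - .single g⁻¹ 1 ∈ lieElements ρ n := by
  have same_fixed_points (p : Fin n) : g⁻¹ p = p ↔ g p = p := by
    rw [Perm.inv_eq_iff_eq, eq_comm]
  simp only [mem_lieElements, map_sub, diagonalAction_single, derivationAction_single,
    exteriorPower_map_top_eq_sign hρ, exteriorDerivation_top_eq_card_fixed hρ, Perm.sign_inv,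
    same_fixed_points, sub_self]

end PermutationRepresentation

section SymmetricGroupThree

theorem sum_perm_fin_three {M : Type*} [AddCommMonoid M] (f : Perm (Fin 3) → M) :
    ∑ σ, f σ = f 1 + f (swap 0 1) + f (swap 1 2) + f (swap 0 2)
      + f (swap 0 1 * swap 1 2) + f (swap 0 2 * swap 2 1) := by
  have univ_eq : (Finset.univ : Finset (Perm (Fin 3))) =
      {1, swap 0 1, swap 1 2, swap 0 2, swap 0 1 * swap 1 2, swap 0 2 * swap 2 1} := by decide
  rw [univ_eq]
  repeat rw [Finset.sum_insert (by decide)]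
  simp only [Finset.sum_singleton, add_assoc]

/-- The basis `1 - (12)`, `1 - (23)`, `1 - (13)`, `(123) - (132)` of the space of Lie elements of
`R[S₃]`, with indices shifted to be `0`-based. -/
noncomputable def lieBasis (R : Type*) [CommRing R] : Fin 4 → MonoidAlgebra R (Perm (Fin 3)) :=
  ![1 - .single (swap 0 1) 1, 1 - .single (swap 1 2) 1, 1 - .single (swap 0 2) 1,
    .single (swap 0 1 * swap 1 2) 1 - .single (swap 0 2 * swap 2 1) 1]

variable {R V : Type*} [CommRing R] [AddCommGroup V] [Module R V]

theorem linearIndependent_lieBasis : LinearIndependent R (lieBasis R) := by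
  let coords : MonoidAlgebra R (Perm (Fin 3)) →ₗ[R] Fin 4 → R :=
    LinearMap.pi ![-(MonoidAlgebra.basis _ R).coord (swap 0 1),
      -(MonoidAlgebra.basis _ R).coord (swap 1 2), -(MonoidAlgebra.basis _ R).coord (swap 0 2),
      (MonoidAlgebra.basis _ R).coord (swap 0 1 * swap 1 2)]
  have coords_lieBasis : coords ∘ lieBasis R = Pi.basisFun R (Fin 4) := by
    have coord_eq_coeff (σ : Perm (Fin 3)) (x : MonoidAlgebra R (Perm (Fin 3))) :
        (MonoidAlgebra.basis _ R).coord σ x = x.coeff σ := rfl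
    ext i j
    fin_cases i <;> fin_cases j <;>
      simp +decide [coords, lieBasis, coord_eq_coeff, MonoidAlgebra.one_def,
        MonoidAlgebra.coeff_single, -Basis.coord_apply, -Perm.coe_mul]
  refine .of_comp coords ?_
  rw [coords_lieBasis]
  exact (Pi.basisFun R (Fin 4)).linearIndependent

theorem mem_span_lieBasis {x : MonoidAlgebra R (Perm (Fin 3))}
    (h_one : x.coeff 1 = -(x.coeff (swap 0 1) + x.coeff (swap 1 2) + x.coeff (swap 0 2)))
    (h_cycle : x.coeff (swap 0 2 * swap 2 1) = -x.coeff (swap 0 1 * swap 1 2)) :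
    x ∈ Submodule.span R (Set.range (lieBasis R)) := by
  rw [Submodule.mem_span_range_iff_exists_fun]
  refine ⟨![-x.coeff (swap 0 1), -x.coeff (swap 1 2), -x.coeff (swap 0 2),
    x.coeff (swap 0 1 * swap 1 2)], ?_⟩
  have expansion := (MonoidAlgebra.basis _ R).sum_repr x
  have repr_eq_coeff : ⇑((MonoidAlgebra.basis _ R).repr x) = x.coeff := rfl
  rw [sum_perm_fin_three] at expansion
  simp only [repr_eq_coeff, MonoidAlgebra.basis_apply, ← MonoidAlgebra.one_def, h_one,
    h_cycle] at expansion
  conv_rhs => rw [← expansion]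
  simp only [Fin.sum_univ_four, lieBasis, Matrix.cons_val]
  module

variable {ρ : Representation R (Perm (Fin 3)) V} {b : Basis (Fin 3) R V}

theorem cycle_sub_cycle_mem_lieElements (hρ : ∀ σ i, ρ σ (b i) = b (σ i)) {m : ℕ} (hm : m ≤ 3) :
    .single (swap 0 1 * swap 1 2) 1 - .single (swap 0 2 * swap 2 1) 1 ∈ lieElements ρ m := by
  have cycle_inv : (swap 0 2 * swap 2 1 : Perm (Fin 3)) = (swap 0 1 * swap 1 2)⁻¹ := by decide
  rw [cycle_inv]
  interval_cases m
  · exact single_sub_single_inv_mem_lieElements_zero ρ _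
  · exact mem_lieElements_one ρ _
  · exact single_sub_single_inv_mem_lieElements_two hρ (by decide) (by decide)
  · exact single_sub_single_inv_mem_lieElements_top hρ _

theorem lieBasis_mem_lieElements (hρ : ∀ σ i, ρ σ (b i) = b (σ i)) (i : Fin 4) {m : ℕ}
    (hm : m ≤ 3) : lieBasis R i ∈ lieElements ρ m := by
  have one_sub_swap_mem {i j : Fin 3} (hij : i ≠ j) : 1 - .single (swap i j) 1 ∈ lieElements ρ m :=
    one_sub_single_mem_lieElements ρ (representation_swap_eq_preReflection hρ hij) m
  match i with
  | 0 => exact one_sub_swap_mem (by decide)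
  | 1 => exact one_sub_swap_mem (by decide)
  | 2 => exact one_sub_swap_mem (by decide)
  | 3 => exact cycle_sub_cycle_mem_lieElements hρ hm

theorem coeff_eq_of_mem_lieElements (h3 : (3 : R) ∈ nonZeroDivisors R)
    (hρ : ∀ σ i, ρ σ (b i) = b (σ i)) {x : MonoidAlgebra R (Perm (Fin 3))}
    (hx₀ : x ∈ lieElements ρ 0) (hx₃ : x ∈ lieElements ρ 3) :
    x.coeff 1 = -(x.coeff (swap 0 1) + x.coeff (swap 1 2) + x.coeff (swap 0 2)) ∧
      x.coeff (swap 0 2 * swap 2 1) = -x.coeff (swap 0 1 * swap 1 2) := by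
  have card_swap {i j : Fin 3} (hij : i ≠ j) : Finset.card {p | swap i j p = p} = 1 := by
    decide +revert
  have card_cycle : Finset.card {p | (swap 0 1 * swap 1 2 : Perm (Fin 3)) p = p} = 0 := by decide
  have card_cycle' : Finset.card {p | (swap 0 2 * swap 2 1 : Perm (Fin 3)) p = p} = 0 := by decide
  have augmentation := (mem_lieElements_zero_iff ρ).mp hx₀
  rw [sum_perm_fin_three] at augmentation
  have sign_eq_fixed : x.coeff 1 - x.coeff (swap 0 1) - x.coeff (swap 1 2) - x.coeff (swap 0 2)
      + x.coeff (swap 0 1 * swap 1 2) + x.coeff (swap 0 2 * swap 2 1) =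
        3 * x.coeff 1 + x.coeff (swap 0 1) + x.coeff (swap 1 2) + x.coeff (swap 0 2) := by
    simpa [sum_perm_fin_three, card_swap, card_cycle, card_cycle', mul_comm, sub_eq_add_neg,
      -Perm.coe_mul] using (mem_lieElements_top_iff hρ).mp hx₃
  have cycles_cancel :
      x.coeff (swap 0 1 * swap 1 2) + x.coeff (swap 0 2 * swap 2 1) = 0 := by
    refine (mul_left_mem_nonZeroDivisors_eq_zero_iff h3).mp ?_
    linear_combination 2 * augmentation + sign_eq_fixed
  exact ⟨by linear_combination augmentation - cycles_cancel, by linear_combination cycles_cancel⟩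

theorem statement13_general (h3 : (3 : R) ∈ nonZeroDivisors R)
    (hρ : ∀ σ i, ρ σ (b i) = b (σ i))
    {A B : (m : ℕ) → Perm (Fin 3) → End R (⋀[R]^m V)}
    (hA : ∀ m σ v, A m σ (ιMulti R m v) = ιMulti R m fun p ↦ ρ σ (v p))
    (hB : ∀ m σ v, B m σ (ιMulti R m v) =
      ∑ p, ιMulti R m (Function.update v p (ρ σ (v p))))
    {Ahat Bhat : (m : ℕ) → MonoidAlgebra R (Perm (Fin 3)) →ₗ[R] End R (⋀[R]^m V)}
    (hAhat : ∀ m σ, Ahat m (.single σ 1) = A m σ)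
    (hBhat : ∀ m σ, Bhat m (.single σ 1) = B m σ) :
    LinearIndependent R (lieBasis R) ∧
      {x | ∀ m ≤ 3, Ahat m x = Bhat m x} = (Submodule.span R (Set.range (lieBasis R)) : Set _) := by
  have Ahat_eq m : Ahat m = diagonalAction ρ m := eq_diagonalAction ρ fun σ v ↦ by rw [hAhat, hA]
  have Bhat_eq m : Bhat m = derivationAction ρ m :=
    eq_derivationAction ρ fun σ v ↦ by rw [hBhat, hB]
  simp only [Ahat_eq, Bhat_eq, ← mem_lieElements]
  refine ⟨linearIndependent_lieBasis, Set.Subset.antisymm (fun x hx ↦ ?_) fun x hx m hm ↦ ?_⟩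
  · obtain ⟨h_one, h_cycle⟩ :=
      coeff_eq_of_mem_lieElements h3 hρ (hx 0 (Nat.zero_le 3)) (hx 3 le_rfl)
    exact mem_span_lieBasis h_one h_cycle
  · refine Submodule.span_le.mpr ?_ hx
    rintro _ ⟨i, rfl⟩
    exact lieBasis_mem_lieElements hρ i hm

end SymmetricGroupThree

theorem permRep_basisFun {n : ℕ} (σ : Perm (Fin n)) (i : Fin n) :
    permRep n σ (Pi.basisFun ℂ (Fin n) i) = Pi.basisFun ℂ (Fin n) (σ i) := by
  ext j
  change Pi.basisFun ℂ (Fin n) i (σ⁻¹ j) = _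
  simp only [Pi.basisFun_apply, Pi.single_apply, Perm.inv_eq_iff_eq]

/-- The space `L_3` of Lie elements of `ℂ[S_3]` with respect to the permutation
representation `ℂ³` has dimension `4`; the elements `1 - (12)`, `1 - (23)`, `1 - (13)` and
`(123) - (132)` form a basis (they are linearly independent and span `L_3`).
Here `(123) = Equiv.swap 0 1 * Equiv.swap 1 2` and `(132) = Equiv.swap 0 2 * Equiv.swap 2 1`
(indices shifted to be 0-based). -/
theorem statement13
    (A B : (m : ℕ) → Equiv.Perm (Fin 3) → Module.End ℂ (⋀[ℂ]^m (Fin 3 → ℂ)))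
    (hA : ∀ (m : ℕ) (σ : Equiv.Perm (Fin 3)) (v : Fin m → (Fin 3 → ℂ)),
      A m σ (wedge ℂ (Fin 3 → ℂ) m v) = wedge ℂ (Fin 3 → ℂ) m fun p => permRep 3 σ (v p))
    (hB : ∀ (m : ℕ) (σ : Equiv.Perm (Fin 3)) (v : Fin m → (Fin 3 → ℂ)),
      B m σ (wedge ℂ (Fin 3 → ℂ) m v) =
        ∑ p : Fin m, wedge ℂ (Fin 3 → ℂ) m (Function.update v p (permRep 3 σ (v p))))
    (Ahat Bhat : (m : ℕ) →
      MonoidAlgebra ℂ (Equiv.Perm (Fin 3)) →ₗ[ℂ] Module.End ℂ (⋀[ℂ]^m (Fin 3 → ℂ)))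
    (hAhat : ∀ (m : ℕ) (σ : Equiv.Perm (Fin 3)), Ahat m (MonoidAlgebra.single σ 1) = A m σ)
    (hBhat : ∀ (m : ℕ) (σ : Equiv.Perm (Fin 3)), Bhat m (MonoidAlgebra.single σ 1) = B m σ) :
    let L : Set (MonoidAlgebra ℂ (Equiv.Perm (Fin 3))) := {x | ∀ m ≤ 3, Ahat m x = Bhat m x}
    let v : Fin 4 → MonoidAlgebra ℂ (Equiv.Perm (Fin 3)) :=
      ![1 - MonoidAlgebra.single (Equiv.swap 0 1) 1,
        1 - MonoidAlgebra.single (Equiv.swap 1 2) 1,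
        1 - MonoidAlgebra.single (Equiv.swap 0 2) 1,
        MonoidAlgebra.single (Equiv.swap 0 1 * Equiv.swap 1 2) 1 -
          MonoidAlgebra.single (Equiv.swap 0 2 * Equiv.swap 2 1) 1]
    LinearIndependent ℂ v ∧ L = ↑(Submodule.span ℂ (Set.range v)) := by
  exact statement13_general (by simp) permRep_basisFun hA hB hAhat hBhat
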